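/- For every integer n ≥ 3, the number of partitions of n in which no odd part is repeated, at least one part equals 1 or 2, the largest part is even, and either the largest part appears at least twice or the largest part minus 1 also occurs as a part, equals the number of partitions of n in which no odd part is repeated, every part is at least 3, and either the largest part is odd, or the largest part is even, appears exactly once, and the largest part minus 1 does not occur as a part. -/

import Mathlib

/-- No even part is repeated (all even parts are distinct). -/
def EvenDistinct {n : ℕ} (p : n.Partition) : Prop :=
  ∀ i, Even i → p.parts.count i ≤ 1

/-- No odd part is repeated (all odd parts are distinct). -/
def OddDistinct {n : ℕ} (p : n.Partition) : Prop :=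
  ∀ i, Odd i → p.parts.count i ≤ 1

/-- The largest part of a partition (0 for the empty partition of 0). -/
def maxPart {n : ℕ} (p : n.Partition) : ℕ := p.parts.sup

/-!
Adjoin an imaginary part `0` to every partition, so that adding a new part `1` also counts as
raising a part by one. In a partition of `n` with distinct odd parts we may raise the largest part,
or raise the small part: `1` if it occurs, otherwise `0`. Both operations are injective and preserve
distinctness of odd parts. The first reaches exactly those partitions of `n + 1` whose largest part
can be lowered again, the second exactly those containing a part `1` or `2`. Hence these two
families of partitions of `n + 1` are equinumerous, and so are their two set differences, which are
the families to be compared.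
-/

section Raising

variable {n a : ℕ}

theorem zero_notMem_parts (p : n.Partition) : 0 ∉ p.parts :=
  fun h => (p.parts_pos h).false

theorem le_maxPart {p : n.Partition} {i : ℕ} (hi : i ∈ p.parts) : i ≤ maxPart p :=
  Multiset.le_sup hi

theorem maxPart_mem {p : n.Partition} (hp : p.parts ≠ 0) : maxPart p ∈ p.parts := by
  obtain ⟨M, hM, hmax⟩ := Multiset.exists_max_image id hp
  have hM_eq : maxPart p = M := le_antisymm (Multiset.sup_le.2 hmax) (le_maxPart hM)
  rwa [hM_eq]

theorem maxPart_eq_zero_or_mem (p : n.Partition) : maxPart p = 0 ∨ maxPart p ∈ p.parts := by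
  by_cases hp : p.parts = 0
  · exact .inl (by simp [maxPart, hp])
  · exact .inr (maxPart_mem hp)

theorem maxPart_eq_of_forall_le {p : n.Partition} (ha : a = 0 ∨ a ∈ p.parts)
    (hle : ∀ i ∈ p.parts, i ≤ a) : maxPart p = a := by
  refine le_antisymm (Multiset.sup_le.2 hle) ?_
  rcases ha with rfl | ha
  · exact Nat.zero_le _
  · exact le_maxPart ha

theorem parts_ne_zero (p : (n + 1).Partition) : p.parts ≠ 0 := by
  intro h
  simpa [h] using p.parts_sum

/-- The partition of `n + 1` obtained by increasing one copy of the part `a` by one. For `a = 0`,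
which is never a part, `erase` does nothing and a new part `1` is added. -/
def raisePart (p : n.Partition) (a : ℕ) (ha : a = 0 ∨ a ∈ p.parts) : (n + 1).Partition where
  parts := (a + 1) ::ₘ p.parts.erase a
  parts_pos := by
    intro i hi
    rcases Multiset.mem_cons.1 hi with rfl | hi
    · exact a.succ_pos
    · exact p.parts_pos (Multiset.mem_of_mem_erase hi)
  parts_sum := by
    have hsum : a + (p.parts.erase a).sum = n := by
      rcases ha with rfl | ha
      · rw [Multiset.erase_of_notMem (zero_notMem_parts p), p.parts_sum, zero_add]
      · rw [Multiset.sum_erase ha, p.parts_sum]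
    rw [Multiset.sum_cons]
    omega

section RaisePart

variable {p q : n.Partition}

theorem succ_mem_raisePart (ha : a = 0 ∨ a ∈ p.parts) : a + 1 ∈ (raisePart p a ha).parts :=
  Multiset.mem_cons_self _ _

theorem eq_succ_or_mem_of_mem_raisePart {ha : a = 0 ∨ a ∈ p.parts} {i : ℕ}
    (hi : i ∈ (raisePart p a ha).parts) : i = a + 1 ∨ i ∈ p.parts :=
  (Multiset.mem_cons.1 hi).imp_right Multiset.mem_of_mem_erase

theorem count_raisePart (ha : a = 0 ∨ a ∈ p.parts) {i : ℕ} (hi : i ≠ 0) :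
    (raisePart p a ha).parts.count i + (if i = a then 1 else 0) =
      p.parts.count i + if i = a + 1 then 1 else 0 := by
  rw [raisePart, Multiset.count_cons]
  by_cases hia : i = a
  · subst hia
    have hpos : 0 < p.parts.count i := Multiset.count_pos.2 (ha.resolve_left hi)
    rw [Multiset.count_erase_self]
    grind
  · rw [Multiset.count_erase_of_ne hia, if_neg hia, add_zero]

theorem eq_of_raisePart_eq {hp : a = 0 ∨ a ∈ p.parts} {hq : a = 0 ∨ a ∈ q.parts}
    (h : raisePart p a hp = raisePart q a hq) : p = q := by
  ext i
  rcases eq_or_ne i 0 with rfl | hi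
  · rw [Multiset.count_eq_zero_of_notMem (zero_notMem_parts p),
      Multiset.count_eq_zero_of_notMem (zero_notMem_parts q)]
  · have hp_count := count_raisePart hp hi
    have hq_count := count_raisePart hq hi
    rw [h] at hp_count
    omega

theorem exists_raisePart_eq {r : (n + 1).Partition} (ha : a + 1 ∈ r.parts) :
    ∃ (p : n.Partition) (hp : a = 0 ∨ a ∈ p.parts), raisePart p a hp = r := by
  have hsum : a + (r.parts.erase (a + 1)).sum = n := by
    have hsum_succ := Multiset.sum_erase ha
    rw [r.parts_sum] at hsum_succ
    omega
  have hpos {i : ℕ} (hi : i ∈ r.parts.erase (a + 1)) : 0 < i :=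
    r.parts_pos (Multiset.mem_of_mem_erase hi)
  rcases Nat.eq_zero_or_pos a with rfl | ha_pos
  · refine ⟨⟨r.parts.erase 1, hpos, by simpa using hsum⟩, .inl rfl, Nat.Partition.ext ?_⟩
    have hzero : 0 ∉ r.parts.erase 1 := fun h => (hpos h).false
    simp [raisePart, Multiset.erase_of_notMem hzero, Multiset.cons_erase ha]
  · refine ⟨⟨a ::ₘ r.parts.erase (a + 1), ?_, ?_⟩, .inr (Multiset.mem_cons_self _ _),
      Nat.Partition.ext ?_⟩
    · intro i hi
      rcases Multiset.mem_cons.1 hi with rfl | hi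
      · exact ha_pos
      · exact hpos hi
    · rwa [Multiset.sum_cons]
    · simp [raisePart, Multiset.cons_erase ha]

theorem oddDistinct_raisePart_and_iff (ha : a = 0 ∨ a ∈ p.parts) :
    (OddDistinct (raisePart p a ha) ∧ (Odd a → a ∉ (raisePart p a ha).parts)) ↔
      OddDistinct p ∧ (Odd (a + 1) → a + 1 ∉ p.parts) := by
  simp only [← Multiset.count_eq_zero]
  have hcount {i : ℕ} (hi : Odd i) := count_raisePart ha hi.pos.ne'
  constructor <;> rintro ⟨hodd, hnot⟩ <;> refine ⟨fun i hi => ?_, fun hi => ?_⟩ <;>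
    grind [hcount hi, hodd _ hi]

end RaisePart

/-- The partition of `n + 1` obtained by increasing one copy of the largest part by one. -/
def raiseMax (p : n.Partition) : (n + 1).Partition :=
  raisePart p (maxPart p) (maxPart_eq_zero_or_mem p)

/-- The largest part is unrepeated, and lowering it by one does not create a repeated odd part.
Among partitions with distinct odd parts this singles out the image of `raiseMax`. -/
def MaxLowerable (p : n.Partition) : Prop :=
  p.parts.count (maxPart p) = 1 ∧ (Odd (maxPart p - 1) → maxPart p - 1 ∉ p.parts)

theorem succ_maxPart_notMem (p : n.Partition) : maxPart p + 1 ∉ p.parts :=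
  fun h => (le_maxPart h).not_gt (Nat.lt_succ_self _)

theorem maxPart_raiseMax (p : n.Partition) : maxPart (raiseMax p) = maxPart p + 1 := by
  refine maxPart_eq_of_forall_le (.inr (succ_mem_raisePart _)) fun i hi => ?_
  rcases eq_succ_or_mem_of_mem_raisePart hi with rfl | hi
  · exact le_rfl
  · exact (le_maxPart hi).trans (Nat.le_succ _)

theorem raiseMax_injective : Function.Injective (raiseMax (n := n)) := by
  intro p q h
  have hmax : maxPart p = maxPart q := by
    simpa only [maxPart_raiseMax, Nat.succ_inj] using congrArg maxPart h
  unfold raiseMax at h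
  simp only [hmax] at h
  exact eq_of_raisePart_eq h

theorem OddDistinct.raiseMax_and_maxLowerable {p : n.Partition} (hp : OddDistinct p) :
    OddDistinct (raiseMax p) ∧ MaxLowerable (raiseMax p) := by
  obtain ⟨hodd, hnot⟩ := (oddDistinct_raisePart_and_iff (maxPart_eq_zero_or_mem p)).2
    ⟨hp, fun _ => succ_maxPart_notMem p⟩
  refine ⟨hodd, ?_, ?_⟩
  · have hcount := count_raisePart (maxPart_eq_zero_or_mem p) (maxPart p).succ_ne_zero
    rw [Multiset.count_eq_zero_of_notMem (succ_maxPart_notMem p)] at hcount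
    rw [maxPart_raiseMax]
    simpa [raiseMax] using hcount
  · rw [maxPart_raiseMax]
    exact hnot

theorem maxPart_eq_of_count_raisePart_eq_one {p : n.Partition} {ha : a = 0 ∨ a ∈ p.parts}
    (hmax : maxPart (raisePart p a ha) = a + 1)
    (hcount : (raisePart p a ha).parts.count (a + 1) = 1) : maxPart p = a := by
  refine maxPart_eq_of_forall_le ha fun i hi => ?_
  have hi_count := count_raisePart ha (p.parts_pos hi).ne'
  have hi_pos := Multiset.count_pos.2 hi
  by_contra! hlt
  have hi_mem : i ∈ (raisePart p a ha).parts := Multiset.count_pos.1 (by grind)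
  have hi_eq : i = a + 1 := le_antisymm (hmax ▸ le_maxPart hi_mem) hlt
  grind

theorem exists_raiseMax_eq {r : (n + 1).Partition} (hr : OddDistinct r) (hlow : MaxLowerable r) :
    ∃ p : n.Partition, OddDistinct p ∧ raiseMax p = r := by
  have hmem : maxPart r ∈ r.parts := maxPart_mem (parts_ne_zero r)
  obtain ⟨a, ha⟩ := Nat.exists_eq_succ_of_ne_zero (r.parts_pos hmem).ne'
  obtain ⟨hcount, hnot⟩ := hlow
  rw [ha] at hmem hcount hnot
  obtain ⟨p, hp, rfl⟩ := exists_raisePart_eq hmem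
  obtain rfl := maxPart_eq_of_count_raisePart_eq_one ha hcount
  exact ⟨p, ((oddDistinct_raisePart_and_iff hp).1 ⟨hr, hnot⟩).1, rfl⟩

theorem image_raiseMax (n : ℕ) : raiseMax '' {p : n.Partition | OddDistinct p} =
    {r | OddDistinct r ∧ MaxLowerable r} := by
  apply Set.Subset.antisymm
  · rintro _ ⟨p, hp, rfl⟩
    exact hp.raiseMax_and_maxLowerable
  · rintro r ⟨hr, hlow⟩
    exact exists_raiseMax_eq hr hlow

/-- The part `1` if it occurs, and the imaginary part `0` otherwise. -/
def smallPart (p : n.Partition) : ℕ := if 1 ∈ p.parts then 1 else 0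

theorem smallPart_eq_zero_or_mem (p : n.Partition) :
    smallPart p = 0 ∨ smallPart p ∈ p.parts := by
  grind [smallPart]

/-- The partition of `n + 1` obtained by turning a part `1` into `2` if there is one, and by adding
a new part `1` otherwise. -/
def raiseSmall (p : n.Partition) : (n + 1).Partition :=
  raisePart p (smallPart p) (smallPart_eq_zero_or_mem p)

/-- Some part is `1` or `2`. -/
def HasSmallPart (p : n.Partition) : Prop := 1 ∈ p.parts ∨ 2 ∈ p.parts

theorem OddDistinct.raiseSmall_and_smallPart_notMem {p : n.Partition} (hp : OddDistinct p) :
    OddDistinct (raiseSmall p) ∧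
      (Odd (smallPart p) → smallPart p ∉ (raiseSmall p).parts) := by
  refine (oddDistinct_raisePart_and_iff (smallPart_eq_zero_or_mem p)).2 ⟨hp, fun hodd => ?_⟩
  grind [smallPart]

theorem hasSmallPart_raiseSmall (p : n.Partition) : HasSmallPart (raiseSmall p) := by
  have hmem : smallPart p + 1 ∈ (raiseSmall p).parts := succ_mem_raisePart _
  grind [smallPart, HasSmallPart]

theorem OddDistinct.one_mem_raiseSmall_iff {p : n.Partition} (hp : OddDistinct p) :
    1 ∈ (raiseSmall p).parts ↔ smallPart p = 0 := by
  have hmem : smallPart p + 1 ∈ (raiseSmall p).parts := succ_mem_raisePart _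
  have hnot := hp.raiseSmall_and_smallPart_notMem.2
  grind [smallPart]

theorem raiseSmall_injOn (n : ℕ) : Set.InjOn raiseSmall {p : n.Partition | OddDistinct p} := by
  intro p hp q hq h
  have hzero : smallPart p = 0 ↔ smallPart q = 0 := by
    rw [← OddDistinct.one_mem_raiseSmall_iff hp, ← OddDistinct.one_mem_raiseSmall_iff hq, h]
  have hsmall : smallPart p = smallPart q := by
    grind [smallPart]
  unfold raiseSmall at h
  simp only [hsmall] at h
  exact eq_of_raisePart_eq h

theorem exists_raiseSmall_eq {r : (n + 1).Partition} (hr : OddDistinct r)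
    (hsmall : HasSmallPart r) :
    ∃ p : n.Partition, OddDistinct p ∧ raiseSmall p = r := by
  suffices h : ∃ (p : n.Partition) (a : ℕ) (ha : a = 0 ∨ a ∈ p.parts),
      OddDistinct p ∧ smallPart p = a ∧ raisePart p a ha = r by
    obtain ⟨p, _, _, hp, rfl, rfl⟩ := h
    exact ⟨p, hp, rfl⟩
  by_cases hone : 1 ∈ r.parts
  · obtain ⟨p, hp, rfl⟩ := exists_raisePart_eq (a := 0) hone
    obtain ⟨hodd, hnot⟩ := (oddDistinct_raisePart_and_iff hp).1 ⟨hr, by simp⟩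
    exact ⟨p, 0, hp, hodd, if_neg (hnot odd_one), rfl⟩
  · obtain ⟨p, hp, rfl⟩ := exists_raisePart_eq (a := 1) (hsmall.resolve_left hone)
    have hodd := ((oddDistinct_raisePart_and_iff hp).1 ⟨hr, fun _ => hone⟩).1
    exact ⟨p, 1, hp, hodd, if_pos (hp.resolve_left one_ne_zero), rfl⟩

theorem image_raiseSmall (n : ℕ) : raiseSmall '' {p : n.Partition | OddDistinct p} =
    {r | OddDistinct r ∧ HasSmallPart r} := by
  apply Set.Subset.antisymm
  · rintro _ ⟨p, hp, rfl⟩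
    exact ⟨(OddDistinct.raiseSmall_and_smallPart_notMem hp).1, hasSmallPart_raiseSmall p⟩
  · rintro r ⟨hr, hsmall⟩
    exact exists_raiseSmall_eq hr hsmall

theorem ncard_hasSmallPart_eq_ncard_maxLowerable (n : ℕ) :
    {p : (n + 1).Partition | OddDistinct p ∧ HasSmallPart p}.ncard =
      {p : (n + 1).Partition | OddDistinct p ∧ MaxLowerable p}.ncard := by
  rw [← image_raiseSmall, ← image_raiseMax, (raiseSmall_injOn n).ncard_image,
    Set.ncard_image_of_injective _ raiseMax_injective]

theorem not_hasSmallPart_iff {p : n.Partition} : ¬ HasSmallPart p ↔ ∀ i ∈ p.parts, 3 ≤ i := by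
  constructor
  · intro hsmall i hi
    have hpos := p.parts_pos hi
    by_contra! hlt
    interval_cases i
    · exact hsmall (.inl hi)
    · exact hsmall (.inr hi)
  · rintro hle (hone | htwo)
    · exact absurd (hle 1 hone) (by decide)
    · exact absurd (hle 2 htwo) (by decide)

theorem OddDistinct.maxLowerable_iff {p : n.Partition} (hodd : OddDistinct p) :
    MaxLowerable p ↔
      Odd (maxPart p) ∨ (p.parts ≠ 0 ∧ Even (maxPart p) ∧ p.parts.count (maxPart p) = 1 ∧
        maxPart p - 1 ∉ p.parts) := by
  rcases eq_or_ne p.parts 0 with hp | hp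
  · simp [MaxLowerable, maxPart, hp]
  · have hmem : maxPart p ∈ p.parts := maxPart_mem hp
    have hpos : 0 < maxPart p := p.parts_pos hmem
    have hcount : 1 ≤ p.parts.count (maxPart p) := Multiset.one_le_count_iff_mem.2 hmem
    have hle := hodd (maxPart p)
    grind [MaxLowerable]

theorem OddDistinct.not_maxLowerable_iff {p : n.Partition} (hodd : OddDistinct p)
    (hp : p.parts ≠ 0) :
    ¬ MaxLowerable p ↔
      Even (maxPart p) ∧ (2 ≤ p.parts.count (maxPart p) ∨ maxPart p - 1 ∈ p.parts) := by
  have hcount : 1 ≤ p.parts.count (maxPart p) := Multiset.one_le_count_iff_mem.2 (maxPart_mem hp)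
  rw [hodd.maxLowerable_iff]
  grind

end Raising

theorem card_with_small_eq_card_without_small : ∀ n : ℕ, 3 ≤ n →
    Nat.card {p : n.Partition // OddDistinct p ∧ (1 ∈ p.parts ∨ 2 ∈ p.parts) ∧
      Even (maxPart p) ∧
      (2 ≤ p.parts.count (maxPart p) ∨ maxPart p - 1 ∈ p.parts)} =
    Nat.card {p : n.Partition // OddDistinct p ∧ (∀ i ∈ p.parts, 3 ≤ i) ∧
      (Odd (maxPart p) ∨
        (p.parts ≠ 0 ∧ Even (maxPart p) ∧ p.parts.count (maxPart p) = 1 ∧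
          maxPart p - 1 ∉ p.parts))} := by
  intro n hn
  obtain ⟨m, rfl⟩ : ∃ m, n = m + 1 := Nat.exists_eq_succ_of_ne_zero (by omega)
  let withSmall : Set (m + 1).Partition := {p | OddDistinct p ∧ HasSmallPart p}
  let lowerable : Set (m + 1).Partition := {p | OddDistinct p ∧ MaxLowerable p}
  calc
    _ = (withSmall \ lowerable).ncard := by
      refine Nat.card_congr (Equiv.subtypeEquivRight fun p => ?_)
      change _ ↔ (OddDistinct p ∧ HasSmallPart p) ∧ ¬ (OddDistinct p ∧ MaxLowerable p)
      grind [OddDistinct.not_maxLowerable_iff, parts_ne_zero, HasSmallPart]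
    _ = (lowerable \ withSmall).ncard :=
      (Set.ncard_eq_ncard_iff_ncard_sdiff_eq_ncard_sdiff).1
        (ncard_hasSmallPart_eq_ncard_maxLowerable m)
    _ = _ := by
      refine Nat.card_congr (Equiv.subtypeEquivRight fun p => ?_)
      change (OddDistinct p ∧ MaxLowerable p) ∧ ¬ (OddDistinct p ∧ HasSmallPart p) ↔ _
      grind [OddDistinct.maxLowerable_iff, not_hasSmallPart_iff]
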